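/- arXiv:2604.13486 — 3 statements merged into one kernel-verified Lean document; each statement's English description precedes it below -/
import Mathlib

section
/- Let d ≥ 2 and let A, B ∈ M_d(ℂ). If U is a Haar-random element of the unitary group U(d), then E[(U†⊗U†)(A⊗B)(U⊗U)] = [(d·Tr(AB) − Tr(A)·Tr(B)) / (d(d²−1))]·𝔽 + [(d·Tr(A)·Tr(B) − Tr(AB)) / (d(d²−1))]·𝕀, where 𝕀 is the identity on ℂ^d⊗ℂ^d and 𝔽 is the swap operator on ℂ^d⊗ℂ^d. -/
open Matrix MeasureTheory
open scoped Kronecker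

noncomputable section

/-- The swap operator `𝔽` on `ℂ^d ⊗ ℂ^d`, `𝔽(u⊗v) = v⊗u`. -/
def swapOp (d : ℕ) : Matrix (Fin d × Fin d) (Fin d × Fin d) ℂ :=
  fun p q => if p.1 = q.2 ∧ p.2 = q.1 then 1 else 0

/-- Integrand: a fourth-order monomial in the entries of a matrix. -/
def mono4 {d : ℕ} (p q : Fin d × Fin d) (a b c e : Fin d) (U : Matrix (Fin d) (Fin d) ℂ) : ℂ :=
  star (U a p.1) * U b q.1 * (star (U c p.2) * U e q.2)

section
variable {d : ℕ} [MeasurableSpace (Matrix.unitaryGroup (Fin d) ℂ)]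
    [BorelSpace (Matrix.unitaryGroup (Fin d) ℂ)]
    (μ : Measure (Matrix.unitaryGroup (Fin d) ℂ))
    [IsProbabilityMeasure μ]

/-- Fourth-order moment. -/
def mom (p q : Fin d × Fin d) (a b c e : Fin d) : ℂ :=
  ∫ U : Matrix.unitaryGroup (Fin d) ℂ, mono4 p q a b c e (U : Matrix (Fin d) (Fin d) ℂ) ∂μ

lemma mono4_integrable (p q : Fin d × Fin d) (a b c e : Fin d) :
    Integrable (fun U : Matrix.unitaryGroup (Fin d) ℂ =>
      mono4 p q a b c e (U : Matrix (Fin d) (Fin d) ℂ)) μ := by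
  have hc : ∀ i j, Continuous (fun U : Matrix.unitaryGroup (Fin d) ℂ =>
      (U : Matrix (Fin d) (Fin d) ℂ) i j) := fun i j =>
    (continuous_apply j).comp ((continuous_apply i).comp continuous_subtype_val)
  have hcont : Continuous (fun U : Matrix.unitaryGroup (Fin d) ℂ =>
      mono4 p q a b c e (U : Matrix (Fin d) (Fin d) ℂ)) := by
    unfold mono4
    exact ((hc _ _).star.mul (hc _ _)).mul ((hc _ _).star.mul (hc _ _))
  refine Integrable.of_bound hcont.aestronglyMeasurable 1 (Filter.Eventually.of_forall ?_)
  intro U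
  have h := fun i j => entry_norm_bound_of_unitary U.2 i j
  unfold mono4
  rw [norm_mul, norm_mul, norm_mul, norm_star, norm_star]
  exact mul_le_one₀ (mul_le_one₀ (h _ _) (norm_nonneg _) (h _ _)) (by positivity)
    (mul_le_one₀ (h _ _) (norm_nonneg _) (h _ _))

lemma mom_inv [μ.IsMulLeftInvariant] (V : Matrix (Fin d) (Fin d) ℂ)
    (hV : V ∈ Matrix.unitaryGroup (Fin d) ℂ) (p q : Fin d × Fin d) (a b c e : Fin d) :
    mom μ p q a b c e = ∫ U : Matrix.unitaryGroup (Fin d) ℂ,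
      mono4 p q a b c e (V * (U : Matrix (Fin d) (Fin d) ℂ)) ∂μ := by
  have := integral_mul_left_eq_self (μ := μ) (fun U : Matrix.unitaryGroup (Fin d) ℂ =>
    mono4 p q a b c e (U : Matrix (Fin d) (Fin d) ℂ)) ⟨V, hV⟩
  exact this.symm

lemma mom_diag [μ.IsMulLeftInvariant] (m : Fin d) (p q : Fin d × Fin d) (a b c e : Fin d) :
    mom μ p q a b c e =
      (star (if a = m then Complex.I else 1) * (if b = m then Complex.I else 1) *
        (star (if c = m then Complex.I else 1) * (if e = m then Complex.I else 1)))
        * mom μ p q a b c e := by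
  conv_lhs => rw [mom_inv μ (diagonal fun k => if k = m then Complex.I else 1) (by
    rw [mem_unitaryGroup_iff, star_eq_conjTranspose, diagonal_conjTranspose, diagonal_mul_diagonal,
      ← diagonal_one]
    congr 1
    funext k
    by_cases hk : k = m <;> simp [hk])]
  rw [mom, ← integral_const_mul]
  congr 1
  funext U
  simp only [mono4, diagonal_mul, star_mul']
  ring

lemma mom_zero [μ.IsMulLeftInvariant] (p q : Fin d × Fin d) (a b c e : Fin d)
    (h1 : ¬ (a = b ∧ c = e)) (h2 : ¬ (a = e ∧ c = b)) :
    mom μ p q a b c e = 0 := by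
  have key : ∀ z : ℂ, z ≠ 1 → mom μ p q a b c e = z * mom μ p q a b c e →
      mom μ p q a b c e = 0 := by
    intro z hz h
    have : (1 - z) * mom μ p q a b c e = 0 := by linear_combination h
    exact (mul_eq_zero.mp this).resolve_left (sub_ne_zero.mpr hz.symm)
  have hI : -Complex.I ≠ 1 := by
    intro h; have := congrArg Complex.re h; simp at this
  by_cases hab : a = b
  · subst hab
    have hce : c ≠ e := fun h => h1 ⟨rfl, h⟩
    refine key _ ?_ (mom_diag μ c p q a a c e)
    by_cases hac : a = c <;> simp [hac, hce.symm, hI]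
  · by_cases hae : a = e
    · subst hae
      have hcb : c ≠ b := fun h => h2 ⟨rfl, h⟩
      refine key _ ?_ (mom_diag μ c p q a b c a)
      by_cases hac : a = c <;> simp [hac, hcb.symm, hI]
    · refine key _ ?_ (mom_diag μ a p q a b c e)
      by_cases hac : c = a
      · simp [hac, Ne.symm hab, Ne.symm hae]
        norm_num
      · simp [hac, Ne.symm hab, Ne.symm hae, hI]

lemma perm_mem (σ : Equiv.Perm (Fin d)) :
    σ.permMatrix ℂ ∈ Matrix.unitaryGroup (Fin d) ℂ := by
  rw [mem_unitaryGroup_iff, star_eq_conjTranspose, conjTranspose_permMatrix, ← permMatrix_mul]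
  simp

lemma perm_mul_apply (σ : Equiv.Perm (Fin d)) (U : Matrix (Fin d) (Fin d) ℂ) (i j : Fin d) :
    (σ.permMatrix ℂ * U) i j = U (σ i) j := by
  rw [Equiv.Perm.permMatrix, PEquiv.toMatrix_toPEquiv_mul]
  rfl

lemma mom_perm [μ.IsMulLeftInvariant] (σ : Equiv.Perm (Fin d)) (p q : Fin d × Fin d)
    (a b c e : Fin d) :
    mom μ p q a b c e = mom μ p q (σ a) (σ b) (σ c) (σ e) := by
  rw [mom_inv μ _ (perm_mem σ)]
  simp only [mono4, perm_mul_apply, mom]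

lemma exists_perm {x y a c : Fin d} (hxy : x ≠ y) (hac : a ≠ c) :
    ∃ σ : Equiv.Perm (Fin d), σ a = x ∧ σ c = y := by
  refine ⟨(Equiv.swap a x).trans (Equiv.swap (Equiv.swap a x c) y), ?_, by simp⟩
  simp only [Equiv.trans_apply, Equiv.swap_apply_left]
  apply Equiv.swap_apply_of_ne_of_ne _ hxy
  intro h
  have : Equiv.swap a x a = Equiv.swap a x c := by rw [← h]; simp
  exact hac ((Equiv.swap a x).injective this)

/-- coefficients -/
lemma had_mem {x y : Fin d} :
    (((1 + Complex.I) / 2) • (1 : Matrix (Fin d) (Fin d) ℂ) +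
      ((1 - Complex.I) / 2) • (Equiv.swap x y).permMatrix ℂ) ∈ Matrix.unitaryGroup (Fin d) ℂ := by
  have h1 : (Equiv.swap x y).permMatrix ℂ * (Equiv.swap x y).permMatrix ℂ = 1 := by
    rw [← permMatrix_mul]; simp
  have h2 : ((Equiv.swap x y).permMatrix ℂ)ᴴ = (Equiv.swap x y).permMatrix ℂ := by
    rw [conjTranspose_permMatrix]; simp
  rw [mem_unitaryGroup_iff, star_eq_conjTranspose, conjTranspose_add, conjTranspose_smul,
    conjTranspose_smul, h2, conjTranspose_one]
  simp only [add_mul, mul_add, smul_mul_assoc, mul_smul_comm, h1, one_mul, mul_one, smul_smul,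
    smul_add]
  have e1 : star ((1 + Complex.I) / 2) = (1 - Complex.I) / 2 := by
    simp [sub_eq_add_neg]
  have e2 : star ((1 - Complex.I) / 2) = (1 + Complex.I) / 2 := by
    simp [sub_eq_add_neg]
  rw [e1, e2]
  generalize (Equiv.swap x y).permMatrix ℂ = S
  have hI := Complex.I_mul_I
  match_scalars
  · linear_combination (-1/2 : ℂ) * hI
  · linear_combination (1/2 : ℂ) * hI

lemma mom_had [μ.IsMulLeftInvariant] {x y : Fin d} (hxy : x ≠ y) (p q : Fin d × Fin d) :
    mom μ p q x x x x = mom μ p q x x y y + mom μ p q x y y x := by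
  have hI := Complex.I_mul_I
  have e1 : star ((1 + Complex.I) / 2) = (1 - Complex.I) / 2 := by
    simp [sub_eq_add_neg]
  have e2 : star ((1 - Complex.I) / 2) = (1 + Complex.I) / 2 := by
    simp [sub_eq_add_neg]
  have h := mom_inv μ _ (had_mem (x := x) (y := y)) p q x x x x
  let α : Fin 2 → ℂ := ![(1 + Complex.I) / 2, (1 - Complex.I) / 2]
  let v : Fin 2 → Fin d := ![x, y]
  have hexp : ∀ U : Matrix.unitaryGroup (Fin d) ℂ,
      mono4 p q x x x x ((((1 + Complex.I) / 2) • (1 : Matrix (Fin d) (Fin d) ℂ) +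
      ((1 - Complex.I) / 2) • (Equiv.swap x y).permMatrix ℂ) * (U : Matrix (Fin d) (Fin d) ℂ))
      = ∑ i, ∑ j, ∑ k, ∑ l, (star (α i) * α j * (star (α k) * α l)) *
        mono4 p q (v i) (v j) (v k) (v l) (U : Matrix (Fin d) (Fin d) ℂ) := by
    intro U
    simp only [mono4, add_mul, smul_mul_assoc, one_mul, Matrix.add_apply, Matrix.smul_apply,
      perm_mul_apply, Equiv.swap_apply_left, Fin.sum_univ_two, α, v, Matrix.cons_val_zero,
      Matrix.cons_val_one, smul_eq_mul, star_add, star_mul']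
    ring
  simp only [hexp] at h
  have hint : ∀ i j k l, Integrable (fun U : Matrix.unitaryGroup (Fin d) ℂ =>
      (star (α i) * α j * (star (α k) * α l)) *
        mono4 p q (v i) (v j) (v k) (v l) (U : Matrix (Fin d) (Fin d) ℂ)) μ :=
    fun i j k l => (mono4_integrable μ _ _ _ _ _ _).const_mul _
  rw [integral_finsetSum _ (fun i _ => integrable_finsetSum _ fun j _ => integrable_finsetSum _
    fun k _ => integrable_finsetSum _ fun l _ => hint i j k l)] at h
  simp_rw [integral_finsetSum _ (fun j _ => integrable_finsetSum _
    fun k _ => integrable_finsetSum _ fun l _ => hint _ j k l),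
    integral_finsetSum _ (fun k _ => integrable_finsetSum _ fun l _ => hint _ _ k l),
    integral_finsetSum _ (fun l _ => hint _ _ _ l), integral_const_mul] at h
  have hm : ∀ a b c e, ∫ U : Matrix.unitaryGroup (Fin d) ℂ,
    mono4 p q a b c e (U : Matrix (Fin d) (Fin d) ℂ) ∂μ = mom μ p q a b c e := fun _ _ _ _ => rfl
  have s1 : mom μ p q y y y y = mom μ p q x x x x := by
    rw [mom_perm μ (Equiv.swap x y)]; simp
  have s2 : mom μ p q y y x x = mom μ p q x x y y := by
    rw [mom_perm μ (Equiv.swap x y)]; simp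
  have s3 : mom μ p q y x x y = mom μ p q x y y x := by
    rw [mom_perm μ (Equiv.swap x y)]; simp
  have z := mom_zero μ p q
  have hyx := hxy.symm
  simp only [hm, Fin.sum_univ_two, α, v, Matrix.cons_val_zero, Matrix.cons_val_one, e1, e2, s1, s2,
    s3,
    z x x x y (by simp [hxy]) (by simp [hxy]), z x x y x (by simp [hyx]) (by simp [hyx]),
    z x y x x (by simp [hxy]) (by simp [hxy]), z y x x x (by simp [hyx]) (by simp [hyx]),
    z x y x y (by simp [hxy]) (by simp [hxy]), z y x y x (by simp [hyx]) (by simp [hyx]),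
    z y y y x (by simp [hyx]) (by simp [hyx]), z y y x y (by simp [hxy]) (by simp [hxy]),
    z y x y y (by simp [hyx]) (by simp [hyx]), z x y y y (by simp [hxy]) (by simp [hxy])] at h
  have h4 : Complex.I ^ 4 = 1 := Complex.I_pow_four
  have h22 : Complex.I ^ 2 = -1 := Complex.I_sq
  ring_nf at h
  simp only [h4, h22] at h
  linear_combination 2 * h

lemma mom_eq [μ.IsMulLeftInvariant] {x y : Fin d} (hxy : x ≠ y) (p q : Fin d × Fin d)
    (a b c e : Fin d) :
    mom μ p q a b c e = (if a = b ∧ c = e then mom μ p q x x y y else 0) +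
      (if a = e ∧ c = b then mom μ p q x y y x else 0) := by
  by_cases h1 : a = b ∧ c = e
  · obtain ⟨rfl, rfl⟩ := h1
    by_cases hac : a = c
    · subst hac
      have := mom_perm μ (Equiv.swap a x) p q a a a a
      simp only [Equiv.swap_apply_left] at this
      simp [this, mom_had μ hxy]
    · obtain ⟨σ, h, h'⟩ := exists_perm hxy hac
      have := mom_perm μ σ p q a a c c
      simp [this, h, h', hac]
  · by_cases h2 : a = e ∧ c = b
    · obtain ⟨rfl, rfl⟩ := h2
      have hac : a ≠ c := fun h => h1 ⟨h, h.symm⟩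
      obtain ⟨σ, h, h'⟩ := exists_perm hxy hac
      have := mom_perm μ σ p q a c c a
      simp [this, h, h', hac]
    · rw [mom_zero μ p q a b c e h1 h2]; simp [h1, h2]

lemma int_sum (p q : Fin d × Fin d) (w : Fin d → Fin d → Fin d → Fin d → ℂ) :
    ∫ U : Matrix.unitaryGroup (Fin d) ℂ, (∑ a, ∑ b, ∑ c, ∑ e, w a b c e *
      mono4 p q a b c e (U : Matrix (Fin d) (Fin d) ℂ)) ∂μ
    = ∑ a, ∑ b, ∑ c, ∑ e, w a b c e * mom μ p q a b c e := by
  have hint : ∀ i j k l, Integrable (fun U : Matrix.unitaryGroup (Fin d) ℂ =>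
      w i j k l * mono4 p q i j k l (U : Matrix (Fin d) (Fin d) ℂ)) μ :=
    fun i j k l => (mono4_integrable μ _ _ _ _ _ _).const_mul _
  rw [integral_finsetSum _ (fun i _ => integrable_finsetSum _ fun j _ => integrable_finsetSum _
    fun k _ => integrable_finsetSum _ fun l _ => hint i j k l)]
  simp_rw [integral_finsetSum _ (fun j _ => integrable_finsetSum _
    fun k _ => integrable_finsetSum _ fun l _ => hint _ j k l),
    integral_finsetSum _ (fun k _ => integrable_finsetSum _ fun l _ => hint _ _ k l),
    integral_finsetSum _ (fun l _ => hint _ _ _ l), integral_const_mul]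
  rfl

lemma orth (U : Matrix.unitaryGroup (Fin d) ℂ) (i j : Fin d) :
    ∑ a, star ((U : Matrix (Fin d) (Fin d) ℂ) a i) * (U : Matrix (Fin d) (Fin d) ℂ) a j
      = if i = j then 1 else 0 := by
  have h := congrFun (congrFun (mem_unitaryGroup_iff'.mp U.2) i) j
  rw [Matrix.mul_apply, Matrix.one_apply] at h
  simpa [star_apply] using h

lemma mom_sum1 (p q : Fin d × Fin d) :
    ∑ a, ∑ c, mom μ p q a a c c = if p.1 = q.1 ∧ p.2 = q.2 then 1 else 0 := by
  unfold mom
  simp_rw [← integral_finsetSum _ (fun c _ => mono4_integrable μ p q _ _ c c)]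
  rw [← integral_finsetSum _ (fun a _ => integrable_finsetSum _ fun c _ =>
    mono4_integrable μ p q a a c c)]
  have : ∀ U : Matrix.unitaryGroup (Fin d) ℂ, ∑ a, ∑ c,
      mono4 p q a a c c (U : Matrix (Fin d) (Fin d) ℂ)
      = if p.1 = q.1 ∧ p.2 = q.2 then 1 else 0 := by
    intro U
    simp only [mono4, ← Finset.mul_sum, ← Finset.sum_mul, orth]
    split_ifs <;> simp_all
  simp only [this]
  simp

lemma mom_sum2 (p q : Fin d × Fin d) :
    ∑ a, ∑ c, mom μ p q a c c a = if p.1 = q.2 ∧ p.2 = q.1 then 1 else 0 := by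
  unfold mom
  simp_rw [← integral_finsetSum _ (fun c _ => mono4_integrable μ p q _ c c _)]
  rw [← integral_finsetSum _ (fun a _ => integrable_finsetSum _ fun c _ =>
    mono4_integrable μ p q a c c a)]
  have : ∀ U : Matrix.unitaryGroup (Fin d) ℂ, ∑ a, ∑ c,
      mono4 p q a c c a (U : Matrix (Fin d) (Fin d) ℂ)
      = if p.1 = q.2 ∧ p.2 = q.1 then 1 else 0 := by
    intro U
    have : ∀ a c, mono4 p q a c c a (U : Matrix (Fin d) (Fin d) ℂ) =
      (star ((U : Matrix (Fin d) (Fin d) ℂ) a p.1) * (U : Matrix (Fin d) (Fin d) ℂ) a q.2) *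
      (star ((U : Matrix (Fin d) (Fin d) ℂ) c p.2) * (U : Matrix (Fin d) (Fin d) ℂ) c q.1) := by
      intro a c; unfold mono4; ring
    simp only [this, ← Finset.mul_sum, ← Finset.sum_mul, orth]
    split_ifs <;> simp_all
  simp only [this]
  simp

end

/-- Second-moment (2-design) formula for the Haar measure on `U(d)`:
`E[(U†⊗U†)(A⊗B)(U⊗U)]
 = ((d·Tr(AB) − Tr A·Tr B)/(d(d²−1)))·𝔽 + ((d·Tr A·Tr B − Tr(AB))/(d(d²−1)))·𝕀`,
the expectation taken entrywise.  The Haar probability measure on `U(d)` is any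
left-invariant Borel probability measure `μ`. -/
theorem stmt_5 (d : ℕ) (hd : 2 ≤ d)
    [MeasurableSpace (Matrix.unitaryGroup (Fin d) ℂ)]
    [BorelSpace (Matrix.unitaryGroup (Fin d) ℂ)]
    (μ : Measure (Matrix.unitaryGroup (Fin d) ℂ))
    [IsProbabilityMeasure μ] [μ.IsMulLeftInvariant]
    (A B : Matrix (Fin d) (Fin d) ℂ) :
    ∀ p q : Fin d × Fin d,
      (∫ U : Matrix.unitaryGroup (Fin d) ℂ,
          (((U : Matrix (Fin d) (Fin d) ℂ)ᴴ ⊗ₖ (U : Matrix (Fin d) (Fin d) ℂ)ᴴ)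
            * (A ⊗ₖ B)
            * ((U : Matrix (Fin d) (Fin d) ℂ) ⊗ₖ (U : Matrix (Fin d) (Fin d) ℂ))) p q ∂μ)
        = ((((d : ℂ) * (A * B).trace - A.trace * B.trace) / (d * (d ^ 2 - 1))) • swapOp d
            + (((d : ℂ) * A.trace * B.trace - (A * B).trace) / (d * (d ^ 2 - 1)))
              • (1 : Matrix (Fin d × Fin d) (Fin d × Fin d) ℂ)) p q := by
  intro p q
  have hxy : (⟨0, by omega⟩ : Fin d) ≠ ⟨1, by omega⟩ := by simp
  have hm := mom_eq μ hxy p q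
  have hs1 := mom_sum1 μ p q
  have hs2 := mom_sum2 μ p q
  generalize mom μ p q ⟨0, by omega⟩ ⟨0, by omega⟩ ⟨1, by omega⟩ ⟨1, by omega⟩ = P at hm
  generalize mom μ p q ⟨0, by omega⟩ ⟨1, by omega⟩ ⟨1, by omega⟩ ⟨0, by omega⟩ = Q at hm
  have hfun : ∀ U : Matrix.unitaryGroup (Fin d) ℂ,
      (((U : Matrix (Fin d) (Fin d) ℂ)ᴴ ⊗ₖ (U : Matrix (Fin d) (Fin d) ℂ)ᴴ)
            * (A ⊗ₖ B)
            * ((U : Matrix (Fin d) (Fin d) ℂ) ⊗ₖ (U : Matrix (Fin d) (Fin d) ℂ))) p q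
      = ∑ a, ∑ b, ∑ c, ∑ e, (A a b * B c e) *
        mono4 p q a b c e (U : Matrix (Fin d) (Fin d) ℂ) := by
    intro U
    rw [← mul_kronecker_mul, ← mul_kronecker_mul, kroneckerMap_apply]
    have hs : ∀ (X : Matrix (Fin d) (Fin d) ℂ) (i j : Fin d),
        ((U : Matrix (Fin d) (Fin d) ℂ)ᴴ * X * (U : Matrix (Fin d) (Fin d) ℂ)) i j
        = ∑ a, ∑ b, X a b * (star ((U : Matrix (Fin d) (Fin d) ℂ) a i) *
          (U : Matrix (Fin d) (Fin d) ℂ) b j) := by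
      intro X i j
      simp only [Matrix.mul_apply, conjTranspose_apply, Finset.sum_mul]
      rw [Finset.sum_comm]
      refine Finset.sum_congr rfl fun a _ => Finset.sum_congr rfl fun b _ => ?_
      ring
    rw [hs, hs]
    simp only [Finset.sum_mul]
    refine Finset.sum_congr rfl fun a _ => Finset.sum_congr rfl fun b _ => ?_
    simp only [Finset.mul_sum]
    refine Finset.sum_congr rfl fun c _ => Finset.sum_congr rfl fun e _ => ?_
    unfold mono4
    ring
  simp only [hfun]
  rw [int_sum]
  have hL : ∑ a, ∑ b, ∑ c, ∑ e, (A a b * B c e) * mom μ p q a b c e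
      = P * (A.trace * B.trace) + Q * (A * B).trace := by
    simp only [hm, mul_add, Finset.sum_add_distrib]
    congr 1
    · simp [ite_and, Matrix.trace, Finset.mul_sum, mul_comm]
      exact Finset.sum_comm
    · simp [ite_and, Matrix.trace, Matrix.mul_apply, Finset.mul_sum, mul_comm]
  rw [hL]
  have hd0 : (d : ℂ) ≠ 0 := by exact_mod_cast (by omega : d ≠ 0)
  have hd1 : (d : ℂ) ^ 2 - 1 ≠ 0 := by
    rw [sub_ne_zero]
    have : d ^ 2 ≠ 1 := by nlinarith
    exact_mod_cast this
  have e1 : (d : ℂ) ^ 2 * P + d * Q = (1 : Matrix (Fin d × Fin d) (Fin d × Fin d) ℂ) p q := by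
    simp only [Matrix.one_apply, Prod.ext_iff]
    rw [← hs1]
    simp only [hm, Finset.sum_add_distrib]
    simp [ite_and]
    try ring
  have e2 : (d : ℂ) * P + d ^ 2 * Q = swapOp d p q := by
    rw [swapOp, ← hs2]
    simp only [hm, Finset.sum_add_distrib]
    simp [ite_and]
    try ring
  rw [Matrix.add_apply, Matrix.smul_apply, Matrix.smul_apply, ← e1, ← e2, smul_eq_mul, smul_eq_mul]
  field_simp
  ring
end
end

section
/- Let d ≥ 1 and k ≥ 1, and let ψ = U·e₀ where U is a Haar-random element of U(d) and e₀ ∈ ℂ^d is any fixed unit vector (so ψ is a Haar-random pure state). Then E[|ψ⟩⟨ψ|^{⊗k}] = (Σ_{σ∈S_k} W_σ) / (d(d+1)(d+2)···(d+k−1)), where W_σ is the permutation operator on (ℂ^d)^{⊗k} associated to σ ∈ S_k. -/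
open Matrix MeasureTheory

noncomputable section

/-- The permutation operator `W_σ` on `(ℂ^d)^{⊗k}`, acting on product vectors by
`W_σ(v₁⊗···⊗v_k) = v_{σ⁻¹(1)}⊗···⊗v_{σ⁻¹(k)}`. -/
def permOp (d k : ℕ) (σ : Equiv.Perm (Fin k)) :
    Matrix (Fin k → Fin d) (Fin k → Fin d) ℂ :=
  fun x y => if ∀ t, x t = y (σ⁻¹ t) then 1 else 0

section helpers

lemma aux_unit {d : ℕ} (A : Matrix (Fin d) (Fin d) ℂ) (hA : star A = -A) (t : ℝ) :
    NormedSpace.exp (t • A) ∈ Matrix.unitaryGroup (Fin d) ℂ := by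
  rw [Matrix.mem_unitaryGroup_iff, Matrix.star_eq_conjTranspose, ← Matrix.exp_conjTranspose,
    ← Matrix.star_eq_conjTranspose, star_smul, hA, star_trivial, smul_neg,
    ← Matrix.exp_add_of_commute _ _ (Commute.refl (t • A)).neg_right]
  simp

lemma aux_curve {d : ℕ} (A : Matrix (Fin d) (Fin d) ℂ) (hA : star A = -A) :
    ∃ V : ℝ → Matrix (Fin d) (Fin d) ℂ, (∀ t, V t ∈ Matrix.unitaryGroup (Fin d) ℂ) ∧
      V 0 = 1 ∧ ∀ a b, HasDerivAt (fun t => V t a b) (A a b) 0 := by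
  let _ : NormedRing (Matrix (Fin d) (Fin d) ℂ) := Matrix.linftyOpNormedRing
  let _ : NormedAlgebra ℝ (Matrix (Fin d) (Fin d) ℂ) := Matrix.linftyOpNormedAlgebra
  let _ : NormedAlgebra ℚ (Matrix (Fin d) (Fin d) ℂ) := NormedAlgebra.restrictScalars ℚ ℝ _
  refine ⟨fun t => NormedSpace.exp (t • A), fun t => ?_, by simp, fun a b => ?_⟩
  · exact aux_unit A hA t
  · have h := hasDerivAt_exp_smul_const (𝕂 := ℝ) A (0 : ℝ)
    simp only [zero_smul, NormedSpace.exp_zero, one_mul] at h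
    have h1 := (hasDerivAt_pi.1 h) a
    exact (hasDerivAt_pi.1 h1) b

variable {𝒜 : Type*} [NormedCommRing 𝒜] [NormedAlgebra ℂ 𝒜]

lemma aux_skew {d n m : ℕ} (E : 𝒜 →L[ℂ] ℂ) (ψ φ : Fin d → 𝒜)
    (i : Fin d) (x : Fin n → Fin d) (y : Fin m → Fin d)
    (hinv : ∀ V ∈ Matrix.unitaryGroup (Fin d) ℂ,
      E ((∑ j, V i j • ψ j) * (∏ t, ∑ j, V (x t) j • ψ j) *
        ∏ s, ∑ j, star (V (y s) j) • φ j) = E (ψ i * (∏ t, ψ (x t)) * ∏ s, φ (y s)))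
    (A : Matrix (Fin d) (Fin d) ℂ) (hA : star A = -A) :
    E ((∑ j, A i j • ψ j) * (∏ t, ψ (x t)) * (∏ s, φ (y s)) +
      ψ i * (∑ t, (∏ t' ∈ Finset.univ.erase t, ψ (x t')) * ∑ j, A (x t) j • ψ j) *
        (∏ s, φ (y s)) -
      ψ i * (∏ t, ψ (x t)) *
        (∑ s, (∏ s' ∈ Finset.univ.erase s, φ (y s')) * ∑ j, A j (y s) • φ j)) = 0 := by
  obtain ⟨V, hV, hV0, hVd⟩ := aux_curve A hA
  have hAs : ∀ a b, A b a = - star (A a b) := by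
    intro a b
    have := congrFun (congrFun hA b) a
    simp only [Matrix.star_apply, Matrix.neg_apply] at this
    rw [this]; simp
  have h1 : ∀ a, HasDerivAt (fun t => ∑ j, V t a j • ψ j) (∑ j, A a j • ψ j) (0 : ℝ) := by
    intro a
    exact HasDerivAt.fun_sum fun j _ => (hVd a j).smul_const (ψ j)
  have h2 : ∀ a, HasDerivAt (fun t => ∑ j, star (V t a j) • φ j)
      (∑ j, star (A a j) • φ j) (0 : ℝ) := by
    intro a
    exact HasDerivAt.fun_sum fun j _ => (hVd a j).star.smul_const (φ j)
  have h10 : ∀ a, ∑ j, V 0 a j • ψ j = ψ a := by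
    intro a; simp [hV0, Matrix.one_apply, ite_smul]
  have h20 : ∀ a, ∑ j, star (V 0 a j) • φ j = φ a := by
    intro a; simp only [hV0, Matrix.one_apply]
    rw [Finset.sum_eq_single a] <;> simp +contextual [eq_comm]
  have h3 := HasDerivAt.fun_finsetProd (u := Finset.univ) (fun t (_ : t ∈ Finset.univ) => h1 (x t))
  have h4 := HasDerivAt.fun_finsetProd (u := Finset.univ) (fun t (_ : t ∈ Finset.univ) => h2 (y t))
  have h5 := ((h1 i).fun_mul h3).fun_mul h4
  have h6 := (E.restrictScalars ℝ).hasFDerivAt.comp_hasDerivAt (0 : ℝ) h5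
  have h7 : HasDerivAt (fun _ : ℝ => E (ψ i * (∏ t, ψ (x t)) * ∏ s, φ (y s))) 0 0 :=
    hasDerivAt_const _ _
  have h8 := h6.unique (h7.congr_of_eventuallyEq (Filter.Eventually.of_forall fun t => by
    exact hinv (V t) (hV t)))
  simp only [h10, h20] at h8
  rw [← h8]
  have hAs' : ∀ a, ∑ j, A j a • φ j = -∑ j, star (A a j) • φ j := by
    intro a
    rw [← Finset.sum_neg_distrib]
    refine Finset.sum_congr rfl fun j _ => ?_
    rw [hAs a j, neg_smul]
  simp only [ContinuousLinearMap.coe_restrictScalars', hAs']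
  congr 1
  simp only [smul_eq_mul, Finset.sum_neg_distrib, mul_neg]
  ring

lemma aux_all {d n m : ℕ} (E : 𝒜 →L[ℂ] ℂ) (ψ φ : Fin d → 𝒜)
    (i : Fin d) (x : Fin n → Fin d) (y : Fin m → Fin d)
    (hinv : ∀ V ∈ Matrix.unitaryGroup (Fin d) ℂ,
      E ((∑ j, V i j • ψ j) * (∏ t, ∑ j, V (x t) j • ψ j) *
        ∏ s, ∑ j, star (V (y s) j) • φ j) = E (ψ i * (∏ t, ψ (x t)) * ∏ s, φ (y s)))
    (B : Matrix (Fin d) (Fin d) ℂ) :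
    E ((∑ j, B i j • ψ j) * (∏ t, ψ (x t)) * (∏ s, φ (y s)) +
      ψ i * (∑ t, (∏ t' ∈ Finset.univ.erase t, ψ (x t')) * ∑ j, B (x t) j • ψ j) *
        (∏ s, φ (y s)) -
      ψ i * (∏ t, ψ (x t)) *
        (∑ s, (∏ s' ∈ Finset.univ.erase s, φ (y s')) * ∑ j, B j (y s) • φ j)) = 0 := by
  set A₁ : Matrix (Fin d) (Fin d) ℂ := (2⁻¹ : ℂ) • (B - star B) with hA₁
  set A₂ : Matrix (Fin d) (Fin d) ℂ := (-Complex.I * 2⁻¹ : ℂ) • (B + star B) with hA₂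
  have hs1 : star A₁ = -A₁ := by
    rw [hA₁, star_smul, star_sub, star_star, ← smul_neg, neg_sub]; simp
  have hs2 : star A₂ = -A₂ := by
    rw [hA₂, star_smul, star_add, star_star, ← neg_smul, add_comm]; simp
  have hB : B = A₁ + Complex.I • A₂ := by
    rw [hA₁, hA₂, smul_smul]
    have : Complex.I * (-Complex.I * 2⁻¹) = 2⁻¹ := by
      rw [← mul_assoc, mul_neg, Complex.I_mul_I]; simp
    rw [this, ← smul_add, sub_add_add_cancel, ← two_smul ℂ B, smul_smul]; simp
  have e1 := aux_skew E ψ φ i x y hinv A₁ hs1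
  have e2 := aux_skew E ψ φ i x y hinv A₂ hs2
  clear_value A₁ A₂
  have e3 : ∀ u v : 𝒜, E u = 0 → E v = 0 → E (u + Complex.I • v) = 0 := by
    intro u v hu hv; rw [map_add, map_smul, hu, hv]; simp
  have e4 := e3 _ _ e1 e2
  rw [← e4, hB]
  congr 1
  simp only [Matrix.add_apply, Matrix.smul_apply, add_smul, smul_eq_mul, mul_smul,
    Finset.sum_add_distrib, mul_add, ← Finset.smul_sum, mul_smul_comm, smul_add, smul_sub,
    add_mul, smul_mul_assoc]
  abel

lemma aux_step {d n m : ℕ} (E : 𝒜 →L[ℂ] ℂ) (ψ φ : Fin d → 𝒜)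
    (hone : ∑ j, ψ j * φ j = 1)
    (x : Fin n → Fin d) (y : Fin m → Fin d)
    (hinv : ∀ i, ∀ V ∈ Matrix.unitaryGroup (Fin d) ℂ,
      E ((∑ j, V i j • ψ j) * (∏ t, ∑ j, V (x t) j • ψ j) *
        ∏ s, ∑ j, star (V (y s) j) • φ j) = E (ψ i * (∏ t, ψ (x t)) * ∏ s, φ (y s)))
    (i : Fin d) :
    ((d : ℂ) + n) * E (ψ i * (∏ t, ψ (x t)) * ∏ s, φ (y s)) =
      ∑ s, if i = y s then
        E ((∏ t, ψ (x t)) * ∏ s' ∈ Finset.univ.erase s, φ (y s')) else 0 := by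
  have h : ∀ j, _ := fun j => aux_all E ψ φ j x y (hinv j) (Matrix.single j i 1)
  have hs : ∀ (a b j : Fin d), Matrix.single j i (1 : ℂ) a b
      = (if j = a then 1 else 0) * (if i = b then 1 else 0) := by
    intro a b j; rw [Matrix.single_apply]; split_ifs <;> simp_all
  have k1 : ∀ a j : Fin d, ∑ b, Matrix.single j i (1 : ℂ) a b • ψ b = if j = a then ψ i else 0 := by
    intro a j; simp only [hs]; simp [mul_smul, ite_smul]
  have k2 : ∀ b j : Fin d, ∑ a, Matrix.single j i (1 : ℂ) a b • φ a = if i = b then φ j else 0 := by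
    intro b j; simp only [hs]; simp [ite_smul]
  simp only [k1, k2] at h
  have h' := Finset.sum_congr (rfl : (Finset.univ : Finset (Fin d)) = _) (fun j _ => h j)
  rw [← map_sum] at h'
  simp only [Finset.sum_const_zero, if_true] at h'
  have e : ∑ j, (ψ i * (∏ t, ψ (x t)) * (∏ s, φ (y s)) +
      ψ j * (∑ t, (∏ t' ∈ Finset.univ.erase t, ψ (x t')) * if j = x t then ψ i else 0) *
        (∏ s, φ (y s)) -
      ψ j * (∏ t, ψ (x t)) *
        (∑ s, (∏ s' ∈ Finset.univ.erase s, φ (y s')) * if i = y s then φ j else 0))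
      = ((d : ℂ) + n) • (ψ i * (∏ t, ψ (x t)) * ∏ s, φ (y s))
        - ∑ s, if i = y s then
          ((∏ t, ψ (x t)) * ∏ s' ∈ Finset.univ.erase s, φ (y s')) else 0 := by
    rw [Finset.sum_sub_distrib, Finset.sum_add_distrib]
    congr 1
    · rw [add_smul]
      congr 1
      · simp [Nat.cast_smul_eq_nsmul]
      · rw [← Finset.sum_mul]
        simp only [Finset.mul_sum]
        rw [Finset.sum_comm]
        have : ∀ t, ∑ j, ψ j * ((∏ t' ∈ Finset.univ.erase t, ψ (x t')) *
            if j = x t then ψ i else 0) = ψ i * ∏ t, ψ (x t) := by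
          intro t
          rw [← Finset.mul_prod_erase Finset.univ (fun t => ψ (x t)) (Finset.mem_univ t)]
          simp only [mul_ite, mul_zero, Finset.sum_ite_eq', Finset.mem_univ, if_true]
          ring
        simp only [this]
        simp [Nat.cast_smul_eq_nsmul]
        ring
    · simp only [Finset.mul_sum]
      rw [Finset.sum_comm]
      refine Finset.sum_congr rfl fun s _ => ?_
      split_ifs
      · rw [← mul_one ((∏ t, ψ (x t)) * _), ← hone, Finset.mul_sum]
        refine Finset.sum_congr rfl fun j _ => ?_
        ring
      · simp
  rw [e, map_sub, map_smul, map_sum, sub_eq_zero, smul_eq_mul] at h'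
  rw [h']
  refine Finset.sum_congr rfl fun s _ => ?_
  split_ifs <;> simp

lemma aux_perm_sum (d n : ℕ) (x y : Fin (n + 1) → Fin d) :
    ∑ σ : Equiv.Perm (Fin (n + 1)), permOp d (n + 1) σ x y =
      ∑ s, if x 0 = y s then ∑ σ : Equiv.Perm (Fin n),
        permOp d n σ (fun t => x t.succ) (fun t => y (Equiv.swap 0 s t.succ)) else 0 := by
  rw [← Equiv.sum_comp (Equiv.inv (Equiv.Perm (Fin (n + 1)))),
    ← Equiv.sum_comp Equiv.Perm.decomposeFin.symm, Fintype.sum_prod_type]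
  refine Finset.sum_congr rfl fun s _ => ?_
  rw [← Equiv.sum_comp (Equiv.inv (Equiv.Perm (Fin n)))]
  simp only [permOp, Equiv.inv_apply, inv_inv, Fin.forall_fin_succ,
    Equiv.Perm.decomposeFin_symm_apply_zero, Equiv.Perm.decomposeFin_symm_apply_succ]
  split_ifs with h <;> simp [h]

lemma aux_main {d : ℕ} (hd : 1 ≤ d)
    (E : 𝒜 →L[ℂ] ℂ) (ψ φ : Fin d → 𝒜)
    (hone : ∑ j, ψ j * φ j = 1) (hE : E 1 = 1)
    (hinv : ∀ (n m : ℕ) (i : Fin d) (x : Fin n → Fin d) (y : Fin m → Fin d),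
      ∀ V ∈ Matrix.unitaryGroup (Fin d) ℂ,
      E ((∑ j, V i j • ψ j) * (∏ t, ∑ j, V (x t) j • ψ j) *
        ∏ s, ∑ j, star (V (y s) j) • φ j) = E (ψ i * (∏ t, ψ (x t)) * ∏ s, φ (y s)))
    (k : ℕ) : ∀ (x y : Fin k → Fin d),
    E ((∏ t, ψ (x t)) * ∏ s, φ (y s)) = (∑ σ : Equiv.Perm (Fin k), permOp d k σ x y)
            / ∏ j ∈ Finset.range k, ((d : ℂ) + j) := by
  induction k with
  | zero => intro x y; simp [hE, permOp]
  | succ n ih =>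
    intro x y
    have hne : (d : ℂ) + n ≠ 0 := by
      have : d + n ≠ 0 := by omega
      exact_mod_cast this
    have h := aux_step E ψ φ hone (fun t => x t.succ) y (fun i => hinv _ _ i _ _) (x 0)
    rw [Fin.prod_univ_succ, aux_perm_sum, Finset.prod_range_succ, mul_comm (∏ j ∈ _, _),
      ← div_div, eq_div_iff_mul_eq (by
        rw [Finset.prod_ne_zero_iff]
        intro j _
        have : d + j ≠ 0 := by omega
        exact_mod_cast this), eq_div_iff_mul_eq hne]
    rw [mul_right_comm, mul_comm (E _), h, Finset.sum_mul]
    refine Finset.sum_congr rfl fun s _ => ?_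
    split_ifs with hs
    · have : ∏ s' ∈ Finset.univ.erase s, φ (y s') = ∏ t : Fin n, φ (y (Equiv.swap 0 s t.succ)) := by
        symm
        refine Finset.prod_bij (fun t _ => Equiv.swap 0 s t.succ) ?_ ?_ ?_ ?_
        · intro t _
          simp only [Finset.mem_erase, Finset.mem_univ, and_true]
          intro h
          have := (Equiv.swap 0 s).injective (h.trans (Equiv.swap_apply_left 0 s).symm)
          exact Fin.succ_ne_zero _ this
        · intro a _ b _ h
          exact Fin.succ_injective _ ((Equiv.swap 0 s).injective h)
        · intro b hb
          simp only [Finset.mem_erase, Finset.mem_univ, and_true] at hb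
          have h0 : Equiv.swap 0 s b ≠ 0 := by
            intro h
            apply hb
            have h' := congrArg (Equiv.swap 0 s) h
            rwa [Equiv.swap_apply_self, Equiv.swap_apply_left] at h'
          obtain ⟨t, ht⟩ := Fin.exists_succ_eq.2 h0
          exact ⟨t, Finset.mem_univ _, by rw [ht, Equiv.swap_apply_self]⟩
        · intro t _; rfl
      rw [this, ih, div_mul_cancel₀]
      rw [Finset.prod_ne_zero_iff]
      intro j _
      have : d + j ≠ 0 := by omega
      exact_mod_cast this
    · simp

end helpers

/-- Moments of a Haar-random pure state `ψ = U e₀`: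
`E[|ψ⟩⟨ψ|^{⊗k}] = (Σ_{σ∈S_k} W_σ)/(d(d+1)⋯(d+k−1))`, entrywise.  The Haar
probability measure on `U(d)` is any left-invariant Borel probability measure. -/
theorem stmt_8 (d k : ℕ) (hd : 1 ≤ d) (hk : 1 ≤ k)
    [MeasurableSpace (Matrix.unitaryGroup (Fin d) ℂ)]
    [BorelSpace (Matrix.unitaryGroup (Fin d) ℂ)]
    (μ : Measure (Matrix.unitaryGroup (Fin d) ℂ))
    [IsProbabilityMeasure μ] [μ.IsMulLeftInvariant]
    (e₀ : Fin d → ℂ) (he₀ : star e₀ ⬝ᵥ e₀ = 1) :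
    ∀ x y : Fin k → Fin d,
      (∫ U : Matrix.unitaryGroup (Fin d) ℂ,
          ∏ t, ((U : Matrix (Fin d) (Fin d) ℂ).mulVec e₀ (x t)
            * starRingEnd ℂ ((U : Matrix (Fin d) (Fin d) ℂ).mulVec e₀ (y t))) ∂μ)
        = (∑ σ : Equiv.Perm (Fin k), permOp d k σ x y)
            / ∏ j ∈ Finset.range k, ((d : ℂ) + j) := by
  
  intro x y
  have hbd : ∀ (b : Fin d) (U : Matrix.unitaryGroup (Fin d) ℂ),
      ‖(U : Matrix (Fin d) (Fin d) ℂ).mulVec e₀ b‖ ≤ ∑ j, ‖e₀ j‖ := by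
    intro b U
    simp only [Matrix.mulVec, dotProduct]
    refine (norm_sum_le _ _).trans (Finset.sum_le_sum fun j _ => ?_)
    rw [norm_mul]
    exact mul_le_of_le_one_left (norm_nonneg _) (entry_norm_bound_of_unitary U.2 b j)
  have hcont : ∀ b : Fin d, Continuous fun U : Matrix.unitaryGroup (Fin d) ℂ =>
      (U : Matrix (Fin d) (Fin d) ℂ).mulVec e₀ b := by
    intro b
    exact (continuous_apply b).comp (continuous_subtype_val.matrix_mulVec continuous_const)
  let ψ : Fin d → BoundedContinuousFunction (Matrix.unitaryGroup (Fin d) ℂ) ℂ := fun b =>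
    BoundedContinuousFunction.ofNormedAddCommGroup _ (hcont b) _ (hbd b)
  let φ : Fin d → BoundedContinuousFunction (Matrix.unitaryGroup (Fin d) ℂ) ℂ := fun b =>
    star (ψ b)
  have hψ : ∀ b U, ψ b U = (U : Matrix (Fin d) (Fin d) ℂ).mulVec e₀ b := fun _ _ => rfl
  have hφ : ∀ b U, φ b U = star ((U : Matrix (Fin d) (Fin d) ℂ).mulVec e₀ b) := fun _ _ => rfl
  clear_value φ ψ
  have hint : ∀ f : BoundedContinuousFunction (Matrix.unitaryGroup (Fin d) ℂ) ℂ,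
      Integrable f μ := fun f => f.integrable μ
  let E : BoundedContinuousFunction (Matrix.unitaryGroup (Fin d) ℂ) ℂ →L[ℂ] ℂ :=
    LinearMap.mkContinuous
      { toFun := fun f => ∫ U, f U ∂μ
        map_add' := fun f g => integral_add (hint f) (hint g)
        map_smul' := fun c f => integral_smul c f } 1 (fun f => by
          simpa using f.norm_integral_le_norm μ)
  have hE : ∀ f, E f = ∫ U, f U ∂μ := fun _ => rfl
  clear_value E
  have hsum : ∀ (n : ℕ) (f : Fin n → BoundedContinuousFunction (Matrix.unitaryGroup (Fin d) ℂ) ℂ) U,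
      (∑ j, f j) U = ∑ j, f j U := by
    intro n f U; simp
  have hprod : ∀ (n : ℕ) (f : Fin n → BoundedContinuousFunction (Matrix.unitaryGroup (Fin d) ℂ) ℂ) U,
      (∏ j, f j) U = ∏ j, f j U := by
    intro n f U
    induction n with
    | zero => simp
    | succ n ih => rw [Fin.prod_univ_succ, Fin.prod_univ_succ, BoundedContinuousFunction.mul_apply, ih]
  have hVψ : ∀ (V U : Matrix.unitaryGroup (Fin d) ℂ) (a : Fin d),
      ∑ j, (V : Matrix (Fin d) (Fin d) ℂ) a j * ψ j U = ψ a (V * U) := by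
    intro V U a
    simp only [hψ]
    rw [Submonoid.coe_mul, ← Matrix.mulVec_mulVec]
    rfl
  have hφψ : ∀ a U, φ a U = star (ψ a U) := fun a U => by rw [hφ, hψ]
  have hVφ : ∀ (V U : Matrix.unitaryGroup (Fin d) ℂ) (a : Fin d),
      ∑ j, star ((V : Matrix (Fin d) (Fin d) ℂ) a j) * φ j U = φ a (V * U) := by
    intro V U a
    simp only [hφψ, ← hVψ V U a, star_sum, star_mul']
  have hmain := aux_main hd E ψ φ ?_ ?_ ?_ k x y
  · rw [← hmain, hE]
    congr 1
    funext U
    rw [BoundedContinuousFunction.mul_apply, hprod, hprod, ← Finset.prod_mul_distrib]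
    simp only [hψ, hφ]
    rfl
  · ext U
    rw [hsum]
    simp only [BoundedContinuousFunction.mul_apply, hψ, hφ]
    change _ = (1 : ℂ)
    have h1 : star ((U : Matrix (Fin d) (Fin d) ℂ).mulVec e₀) ⬝ᵥ
        (U : Matrix (Fin d) (Fin d) ℂ).mulVec e₀ = 1 := by
      rw [Matrix.star_mulVec, ← Matrix.dotProduct_mulVec, Matrix.mulVec_mulVec,
        ← Matrix.star_eq_conjTranspose, Matrix.mem_unitaryGroup_iff'.1 U.2, Matrix.one_mulVec, he₀]
    rw [← h1]
    simp only [dotProduct, Pi.star_apply, mul_comm]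
  · rw [hE]; simp
  · intro n m i x y V hV
    rw [hE, hE, ← integral_mul_left_eq_self (fun U => (ψ i * (∏ t, ψ (x t)) * ∏ s, φ (y s)) U) (⟨V, hV⟩ : Matrix.unitaryGroup (Fin d) ℂ)]
    congr 1
    funext U
    simp only [BoundedContinuousFunction.mul_apply, hprod, hsum, BoundedContinuousFunction.smul_apply,
      smul_eq_mul, ← hVψ ⟨V, hV⟩ U, ← hVφ ⟨V, hV⟩ U]
end
end

section
/- Let d ≥ 1 and M ∈ M_d(ℂ), and let ψ = U·e₀ be a Haar-random pure state in ℂ^d (U Haar-random in U(d), e₀ a fixed unit vector). Then E[⟨ψ|M|ψ⟩³] = ((Tr M)³ + 3·Tr(M²)·Tr(M) + 2·Tr(M³)) / (d(d+1)(d+2)). -/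
open Matrix MeasureTheory

lemma aux_poly {R : Type*} [CommRing R] [Algebra ℂ R] (L : R →ₗ[ℂ] ℂ) (Q : Polynomial R) :
    ∃ P : Polynomial ℂ, ∀ t : ℂ, L (Q.eval (algebraMap ℂ R t)) = P.eval t := by
  induction Q using Polynomial.induction_on' with
  | add p q hp hq =>
    obtain ⟨P, hP⟩ := hp
    obtain ⟨P2, hP2⟩ := hq
    exact ⟨P + P2, fun t => by simp [hP, hP2]⟩
  | monomial n r =>
    refine ⟨Polynomial.monomial n (L r), fun t => ?_⟩
    rw [Polynomial.eval_monomial, Polynomial.eval_monomial, ← map_pow, mul_comm, ← Algebra.smul_def,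
      map_smul, smul_eq_mul, mul_comm]

lemma aux_circle (P : Polynomial ℂ) (h : ∀ t : ℂ, t * star t = 1 → P.eval t = 0) : P = 0 := by
  apply Polynomial.eq_zero_of_infinite_isRoot
  have h1 : (Metric.sphere (0 : ℂ) 1).Infinite := by
    apply IsPreconnected.infinite_of_nontrivial
    · exact isPreconnected_sphere (by rw [Complex.rank_real_complex]; norm_num) 0 1
    · exact ⟨1, by simp, -1, by simp, by norm_num⟩
  refine h1.mono ?_
  intro t ht
  apply h
  simp only [mem_sphere_zero_iff_norm] at ht
  have := Complex.mul_conj t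
  rw [Complex.normSq_eq_norm_sq, ht] at this
  simpa using this

section
variable {R : Type*} [CommRing R] [Algebra ℂ R] (L : R →ₗ[ℂ] ℂ) {d : ℕ} (z w : Fin d → R) (a : ℂ)

/-- linear form attached to a coefficient vector -/
def lf (z : Fin d → R) (x : Fin d → ℂ) : R := ∑ i, x i • z i

lemma lf_add (x y : Fin d → ℂ) : lf z (x + y) = lf z x + lf z y := by
  simp [lf, add_smul, Finset.sum_add_distrib]
lemma lf_smul (t : ℂ) (x : Fin d → ℂ) : lf z (t • x) = algebraMap ℂ R t * lf z x := by
  simp [lf, Algebra.smul_def, Finset.mul_sum, mul_assoc]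
lemma lf_single (i : Fin d) : lf z (Pi.single i 1) = z i := by
  simp [lf, Pi.single_apply, ite_smul]

lemma step1 (h : ∀ v : Fin d → ℂ, L (lf z v ^ 3 * lf w (star v) ^ 3) = a * (v ⬝ᵥ star v) ^ 3)
    (x y : Fin d → ℂ) : L (lf z x ^ 3 * lf w y ^ 3) = a * (x ⬝ᵥ y) ^ 3 := by
  obtain ⟨P, hP⟩ := aux_poly L ((Polynomial.C (lf z x) + Polynomial.X * Polynomial.C (lf z (star y))) ^ 3 *
    (Polynomial.X * Polynomial.C (lf w (star x)) + Polynomial.C (lf w y)) ^ 3)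
  let S : Polynomial ℂ := Polynomial.C a * (Polynomial.X * Polynomial.C (x ⬝ᵥ star x) +
    Polynomial.C (x ⬝ᵥ y) + Polynomial.X ^ 2 * Polynomial.C (star y ⬝ᵥ star x) +
    Polynomial.X * Polynomial.C (star y ⬝ᵥ y)) ^ 3
  have key : P - S = 0 := by
    apply aux_circle
    intro t ht
    rw [Polynomial.eval_sub, ← hP]
    have h1 := h (x + t • star y)
    have hs : star (x + t • star y) = star x + star t • y := by
      rw [star_add, star_smul, star_star]
    rw [hs, lf_add, lf_add, lf_smul, lf_smul] at h1
    have ht2 : algebraMap ℂ R t * algebraMap ℂ R (star t) = 1 := by rw [← map_mul, ht, map_one]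
    have e1 : (lf z x + algebraMap ℂ R t * lf z (star y)) ^ 3 *
        (algebraMap ℂ R t * lf w (star x) + lf w y) ^ 3 = t ^ 3 • ((lf z x + algebraMap ℂ R t * lf z (star y)) ^ 3 *
        (lf w (star x) + algebraMap ℂ R (star t) * lf w y) ^ 3) := by
      have : algebraMap ℂ R t * lf w (star x) + lf w y =
        algebraMap ℂ R t * (lf w (star x) + algebraMap ℂ R (star t) * lf w y) := by
        linear_combination (-lf w y) * ht2
      rw [this, Algebra.smul_def, map_pow]; ring
    simp only [Polynomial.eval_mul, Polynomial.eval_add, Polynomial.eval_pow, Polynomial.eval_C,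
      Polynomial.eval_X, S]
    rw [e1, map_smul, h1, smul_eq_mul]
    simp only [add_dotProduct, dotProduct_add, smul_dotProduct, dotProduct_smul, smul_eq_mul]
    have e2 : t * (x ⬝ᵥ star x + t * star y ⬝ᵥ star x + (star t * x ⬝ᵥ y + star t * (t * star y ⬝ᵥ y)))
      = t * x ⬝ᵥ star x + x ⬝ᵥ y + t ^ 2 * star y ⬝ᵥ star x + t * star y ⬝ᵥ y := by
      linear_combination (x ⬝ᵥ y + t * star y ⬝ᵥ y) * ht
    rw [← e2]
    ring
  have h0 := hP 0
  rw [sub_eq_zero.mp key] at h0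
  simpa [S] using h0

lemma pol {S : Type*} [CommRing S] (A B C : S) : 6 * (A * B * C) = (A + B + C) ^ 3 - (A + B) ^ 3 - (A + C) ^ 3
    - (B + C) ^ 3 + A ^ 3 + B ^ 3 + C ^ 3 := by ring

lemma step2 (h : ∀ x y : Fin d → ℂ, L (lf z x ^ 3 * lf w y ^ 3) = a * (x ⬝ᵥ y) ^ 3)
    (p q r y : Fin d → ℂ) : L (lf z p * lf z q * lf z r * lf w y ^ 3) =
      a * ((p ⬝ᵥ y) * (q ⬝ᵥ y) * (r ⬝ᵥ y)) := by
  have e : (6 : ℂ) • (lf z p * lf z q * lf z r * lf w y ^ 3) =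
    lf z (p + q + r) ^ 3 * lf w y ^ 3 - lf z (p + q) ^ 3 * lf w y ^ 3 - lf z (p + r) ^ 3 * lf w y ^ 3
    - lf z (q + r) ^ 3 * lf w y ^ 3 + lf z p ^ 3 * lf w y ^ 3 + lf z q ^ 3 * lf w y ^ 3 + lf z r ^ 3 * lf w y ^ 3 := by
    simp only [lf_add, Algebra.smul_def, map_ofNat]
    ring
  have := congrArg L e
  simp only [map_add, map_sub, map_smul, h, add_dotProduct, smul_eq_mul] at this
  linear_combination this / 6

lemma step3 (h : ∀ x y : Fin d → ℂ, L (lf z x ^ 3 * lf w y ^ 3) = a * (x ⬝ᵥ y) ^ 3)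
    (p q r s t u : Fin d → ℂ) : L (lf z p * lf z q * lf z r * (lf w s * lf w t * lf w u)) =
      a / 6 * ((p ⬝ᵥ s) * (q ⬝ᵥ t) * (r ⬝ᵥ u) + (p ⬝ᵥ s) * (q ⬝ᵥ u) * (r ⬝ᵥ t)
        + (p ⬝ᵥ t) * (q ⬝ᵥ s) * (r ⬝ᵥ u) + (p ⬝ᵥ t) * (q ⬝ᵥ u) * (r ⬝ᵥ s)
        + (p ⬝ᵥ u) * (q ⬝ᵥ s) * (r ⬝ᵥ t) + (p ⬝ᵥ u) * (q ⬝ᵥ t) * (r ⬝ᵥ s)) := by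
  have h2 := step2 L z w a h p q r
  set Z := lf z p * lf z q * lf z r
  have e : (6 : ℂ) • (Z * (lf w s * lf w t * lf w u)) =
    Z * lf w (s + t + u) ^ 3 - Z * lf w (s + t) ^ 3 - Z * lf w (s + u) ^ 3
    - Z * lf w (t + u) ^ 3 + Z * lf w s ^ 3 + Z * lf w t ^ 3 + Z * lf w u ^ 3 := by
    simp only [lf_add, Algebra.smul_def, map_ofNat]
    ring
  have := congrArg L e
  simp only [map_add, map_sub, map_smul, h2, dotProduct_add, smul_eq_mul] at this
  linear_combination this / 6

lemma step4 (h : ∀ x y : Fin d → ℂ, L (lf z x ^ 3 * lf w y ^ 3) = a * (x ⬝ᵥ y) ^ 3)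
    (M : Matrix (Fin d) (Fin d) ℂ) :
    L ((∑ i, w i * lf z (M i)) ^ 3) =
      a / 6 * (M.trace ^ 3 + 3 * (M * M).trace * M.trace + 2 * (M * M * M).trace) := by
  have e : (∑ i, w i * lf z (M i)) ^ 3 = ∑ i, ∑ j, ∑ k, lf z (M i) * lf z (M j) * lf z (M k) *
      (lf w (Pi.single i 1) * lf w (Pi.single j 1) * lf w (Pi.single k 1)) := by
    simp only [lf_single]
    rw [pow_succ, pow_two, Finset.sum_mul_sum, Finset.sum_mul]
    refine Finset.sum_congr rfl fun i _ => ?_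
    rw [Finset.sum_mul]
    refine Finset.sum_congr rfl fun j _ => ?_
    rw [Finset.mul_sum]
    refine Finset.sum_congr rfl fun k _ => ?_
    ring
  rw [e]
  simp only [map_sum, step3 L z w a h, dotProduct_single, mul_one]
  simp only [← Finset.mul_sum]
  congr 1
  have t1 : M.trace = ∑ i, M i i := rfl
  have t2 : (M * M).trace = ∑ i, ∑ j, M i j * M j i := by simp [Matrix.trace, Matrix.mul_apply]
  have t3 : (M * M * M).trace = ∑ i, ∑ j, ∑ k, M i j * M j k * M k i := by
    simp only [Matrix.trace, Matrix.mul_apply, Matrix.diag, Finset.sum_mul]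
    refine Finset.sum_congr rfl fun i _ => ?_
    rw [Finset.sum_comm]
  have s0 : M.trace ^ 3 = ∑ i, ∑ j, ∑ k, M i i * M j j * M k k := by
    simp only [t1, pow_succ, pow_zero, one_mul]
    simp_rw [← Finset.mul_sum, ← Finset.sum_mul, ← Finset.mul_sum, ← Finset.sum_mul]
  have s1 : (M * M).trace * M.trace = ∑ i, ∑ j, ∑ k, M i j * M j i * M k k := by
    rw [t1, t2]
    simp_rw [← Finset.mul_sum, ← Finset.sum_mul]
  have s2 : (M * M).trace * M.trace = ∑ i, ∑ j, ∑ k, M i i * M j k * M k j := by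
    rw [mul_comm]
    rw [t1, t2]
    simp_rw [mul_assoc, ← Finset.mul_sum, ← Finset.sum_mul]
  have s3 : (M * M).trace * M.trace = ∑ i, ∑ j, ∑ k, M i k * M j j * M k i := by
    rw [s1]
    refine Finset.sum_congr rfl fun i _ => ?_
    rw [Finset.sum_comm]
    refine Finset.sum_congr rfl fun j _ => Finset.sum_congr rfl fun k _ => ?_
    ring
  have t4 : (M * M * M).trace = ∑ i, ∑ j, ∑ k, M i k * M j i * M k j := by
    rw [t3]
    refine Finset.sum_congr rfl fun i _ => ?_
    rw [Finset.sum_comm]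
    refine Finset.sum_congr rfl fun j _ => Finset.sum_congr rfl fun k _ => ?_
    ring
  simp only [Finset.sum_add_distrib]
  rw [← s0, ← s1, ← s2, ← s3, ← t3, ← t4]
  ring
end

lemma exists_unitary {d : ℕ} (i₀ : Fin d) (u : Fin d → ℂ) (hu : u ⬝ᵥ star u = 1) :
    ∃ V : Matrix.unitaryGroup (Fin d) ℂ, (V : Matrix (Fin d) (Fin d) ℂ) i₀ = u := by
  have ho : Orthonormal ℂ (({i₀} : Set (Fin d)).domRestrict (fun _ : Fin d => (WithLp.toLp 2 u : EuclideanSpace ℂ (Fin d)))) := by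
    constructor
    · intro i
      have : inner ℂ (WithLp.toLp 2 u : EuclideanSpace ℂ (Fin d)) (WithLp.toLp 2 u) = 1 := by
        rw [EuclideanSpace.inner_eq_star_dotProduct]; exact hu
      rw [inner_self_eq_norm_sq_to_K] at this
      have h2 : ‖(WithLp.toLp 2 u : EuclideanSpace ℂ (Fin d))‖ ^ 2 = 1 := by
        apply Complex.ofReal_injective
        push_cast
        exact this
      exact (pow_eq_one_iff_of_nonneg (norm_nonneg _) two_ne_zero).mp h2
    · intro i j hij
      exact absurd (Subsingleton.elim i j) hij
  obtain ⟨b, hb⟩ := ho.exists_orthonormalBasis_extension_of_card_eq (by simp)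
  refine ⟨⟨Matrix.of fun i j => b i j, ?_⟩, ?_⟩
  · rw [Matrix.mem_unitaryGroup_iff]
    ext i k
    have := orthonormal_iff_ite.mp b.orthonormal k i
    rw [EuclideanSpace.inner_eq_star_dotProduct] at this
    simp only [Matrix.mul_apply, Matrix.star_apply, Matrix.of_apply, Matrix.one_apply]
    simp only [eq_comm (a := i) (b := k)]
    rw [← this]
    rfl
  · ext j
    simp [hb i₀ rfl]

lemma cpt (d : ℕ) : CompactSpace (Matrix.unitaryGroup (Fin d) ℂ) := by
  refine isCompact_iff_compactSpace.mp ?_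
  have hK : IsCompact (Set.univ.pi fun _ : Fin d => Set.univ.pi fun _ : Fin d => Metric.closedBall (0 : ℂ) 1) :=
    isCompact_univ_pi fun _ => isCompact_univ_pi fun _ => isCompact_closedBall 0 1
  refine IsCompact.of_isClosed_subset (X := Matrix (Fin d) (Fin d) ℂ) hK ?_ ?_
  · have : ((Matrix.unitaryGroup (Fin d) ℂ : Submonoid (Matrix (Fin d) (Fin d) ℂ)) : Set (Matrix (Fin d) (Fin d) ℂ))
        = {A | A * star A = 1} := by
      ext A
      exact Matrix.mem_unitaryGroup_iff
    rw [this]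
    exact isClosed_eq (continuous_id.mul continuous_star) continuous_const
  · intro A hA i _ j _
    simpa using entry_norm_bound_of_unitary hA i j

/-- integration as a linear functional on continuous functions -/
noncomputable def intL {X : Type*} [TopologicalSpace X] [CompactSpace X] [MeasurableSpace X] [BorelSpace X]
    (μ : Measure X) [IsProbabilityMeasure μ] : C(X, ℂ) →ₗ[ℂ] ℂ where
  toFun f := ∫ x, f x ∂μ
  map_add' f g := by
    simp only [ContinuousMap.add_apply]
    exact integral_add (f.continuous.integrable_of_hasCompactSupport (HasCompactSupport.of_compactSpace _))
      (g.continuous.integrable_of_hasCompactSupport (HasCompactSupport.of_compactSpace _))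
  map_smul' c f := by
    simp [integral_const_mul]

theorem stmt_13 (d : ℕ) (hd : 1 ≤ d) (M : Matrix (Fin d) (Fin d) ℂ)
    [MeasurableSpace (Matrix.unitaryGroup (Fin d) ℂ)]
    [BorelSpace (Matrix.unitaryGroup (Fin d) ℂ)]
    (μ : Measure (Matrix.unitaryGroup (Fin d) ℂ))
    [IsProbabilityMeasure μ] [μ.IsMulLeftInvariant]
    (e₀ : Fin d → ℂ) (he₀ : star e₀ ⬝ᵥ e₀ = 1) :
    (∫ U : Matrix.unitaryGroup (Fin d) ℂ,
        (star ((U : Matrix (Fin d) (Fin d) ℂ).mulVec e₀)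
          ⬝ᵥ M.mulVec ((U : Matrix (Fin d) (Fin d) ℂ).mulVec e₀)) ^ 3 ∂μ)
      = (M.trace ^ 3 + 3 * (M * M).trace * M.trace + 2 * (M * M * M).trace) / (d * (d + 1) * (d + 2)) := by
  have := cpt d
  let i₀ : Fin d := ⟨0, hd⟩
  have hc : ∀ i, Continuous fun U : Matrix.unitaryGroup (Fin d) ℂ =>
      ((U : Matrix (Fin d) (Fin d) ℂ).mulVec e₀) i := fun i =>
    (continuous_apply i).comp (continuous_subtype_val.matrix_mulVec continuous_const)
  let z : Fin d → C(Matrix.unitaryGroup (Fin d) ℂ, ℂ) := fun i => ⟨_, hc i⟩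
  let w : Fin d → C(Matrix.unitaryGroup (Fin d) ℂ, ℂ) := fun i => ⟨_, (hc i).star⟩
  let a : ℂ := ∫ U : Matrix.unitaryGroup (Fin d) ℂ,
    (((U : Matrix (Fin d) (Fin d) ℂ).mulVec e₀) i₀) ^ 3 * (star (((U : Matrix (Fin d) (Fin d) ℂ).mulVec e₀) i₀)) ^ 3 ∂μ
  have hz : ∀ (x : Fin d → ℂ) (U : Matrix.unitaryGroup (Fin d) ℂ),
      lf z x U = x ⬝ᵥ ((U : Matrix (Fin d) (Fin d) ℂ).mulVec e₀) := by
    intro x U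
    simp [lf, z, dotProduct, ContinuousMap.sum_apply]
  have hw : ∀ (x : Fin d → ℂ) (U : Matrix.unitaryGroup (Fin d) ℂ),
      lf w x U = x ⬝ᵥ star ((U : Matrix (Fin d) (Fin d) ℂ).mulVec e₀) := by
    intro x U
    simp [lf, w, dotProduct, ContinuousMap.sum_apply]
  have h0 : ∀ v : Fin d → ℂ, intL μ (lf z v ^ 3 * lf w (star v) ^ 3) = a * (v ⬝ᵥ star v) ^ 3 := by
    have hunit : ∀ u : Fin d → ℂ, u ⬝ᵥ star u = 1 → intL μ (lf z u ^ 3 * lf w (star u) ^ 3) = a := by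
      intro u hu
      obtain ⟨V, hV⟩ := exists_unitary i₀ u hu
      have := integral_mul_left_eq_self (μ := μ) (fun U : Matrix.unitaryGroup (Fin d) ℂ =>
        (((U : Matrix (Fin d) (Fin d) ℂ).mulVec e₀) i₀) ^ 3 * (star (((U : Matrix (Fin d) (Fin d) ℂ).mulVec e₀) i₀)) ^ 3) V
      refine Eq.trans ?_ this
      refine integral_congr_ae (Filter.Eventually.of_forall fun U => ?_)
      have e1 : ((↑(V * U) : Matrix (Fin d) (Fin d) ℂ).mulVec e₀) i₀ = u ⬝ᵥ ((U : Matrix (Fin d) (Fin d) ℂ).mulVec e₀) := by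
        rw [← hV, Submonoid.coe_mul, ← Matrix.mulVec_mulVec]
        rfl
      simp only [ContinuousMap.mul_apply, ContinuousMap.pow_apply, hz, hw]
      rw [e1, ← Matrix.star_dotProduct_star, dotProduct_comm (star _) (star u)]
    intro v
    by_cases hv : v = 0
    · subst hv
      have : lf z (0 : Fin d → ℂ) = 0 := by simp [lf]
      simp [this]
    · have hr : ∃ r : ℝ, r ≠ 0 ∧ v ⬝ᵥ star v = (r : ℂ) ^ 2 := by
        refine ⟨‖(WithLp.toLp 2 v : EuclideanSpace ℂ (Fin d))‖, by simpa using hv, ?_⟩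
        have := inner_self_eq_norm_sq_to_K (𝕜 := ℂ) (WithLp.toLp 2 v : EuclideanSpace ℂ (Fin d))
        rw [EuclideanSpace.inner_eq_star_dotProduct] at this
        exact this
      obtain ⟨r, hr0, hr⟩ := hr
      have hrc : (r : ℂ) ≠ 0 := by exact_mod_cast hr0
      obtain ⟨u, rfl⟩ : ∃ u, v = (r : ℂ) • u := ⟨(r : ℂ)⁻¹ • v, by rw [smul_smul, mul_inv_cancel₀ hrc, one_smul]⟩
      have hst : star ((r : ℂ) • u) = (r : ℂ) • star u := by
        rw [star_smul]; simp
      have hu : u ⬝ᵥ star u = 1 := by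
        rw [hst, smul_dotProduct, dotProduct_smul, smul_eq_mul, smul_eq_mul] at hr
        have : (r : ℂ) ^ 2 * (u ⬝ᵥ star u) = (r : ℂ) ^ 2 * 1 := by linear_combination hr
        exact mul_left_cancel₀ (pow_ne_zero 2 hrc) this
      rw [hr, hst, lf_smul, lf_smul, ← hunit u hu]
      have : (algebraMap ℂ C(Matrix.unitaryGroup (Fin d) ℂ, ℂ) r * lf z u) ^ 3 * (algebraMap ℂ _ r * lf w (star u)) ^ 3
          = ((r : ℂ) ^ 6) • (lf z u ^ 3 * lf w (star u) ^ 3) := by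
        rw [Algebra.smul_def, map_pow]; ring
      rw [this, map_smul, smul_eq_mul]
      ring
  have h4 := step4 (intL μ) z w a (step1 (intL μ) z w a h0)
  have hI : ∀ N : Matrix (Fin d) (Fin d) ℂ, intL μ ((∑ i, w i * lf z (N i)) ^ 3) =
      ∫ U : Matrix.unitaryGroup (Fin d) ℂ,
        (star ((U : Matrix (Fin d) (Fin d) ℂ).mulVec e₀)
          ⬝ᵥ N.mulVec ((U : Matrix (Fin d) (Fin d) ℂ).mulVec e₀)) ^ 3 ∂μ := by
    intro N
    refine integral_congr_ae (Filter.Eventually.of_forall fun U => ?_)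
    simp only [ContinuousMap.pow_apply, ContinuousMap.sum_apply, ContinuousMap.mul_apply, hz]
    rfl
  have h1 : (1 : ℂ) = a / 6 * (d * (d + 1) * (d + 2)) := by
    have := h4 1
    rw [hI] at this
    have hn : ∀ U : Matrix.unitaryGroup (Fin d) ℂ, star ((U : Matrix (Fin d) (Fin d) ℂ).mulVec e₀)
          ⬝ᵥ (1 : Matrix (Fin d) (Fin d) ℂ).mulVec ((U : Matrix (Fin d) (Fin d) ℂ).mulVec e₀) = 1 := by
      intro U
      have hU : (U : Matrix (Fin d) (Fin d) ℂ)ᴴ * (U : Matrix (Fin d) (Fin d) ℂ) = 1 :=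
        Matrix.mem_unitaryGroup_iff'.mp U.2
      rw [Matrix.one_mulVec, Matrix.star_mulVec, ← Matrix.dotProduct_mulVec, Matrix.mulVec_mulVec, hU,
        Matrix.one_mulVec, he₀]
    simp only [hn] at this
    simp at this
    linear_combination this
  rw [← hI, h4]
  have hD : ((d : ℂ) * (d + 1) * (d + 2)) ≠ 0 := by
    intro h
    rw [h, mul_zero] at h1
    exact one_ne_zero h1
  rw [eq_div_iff hD]
  linear_combination (-(M.trace ^ 3 + 3 * (M * M).trace * M.trace + 2 * (M * M * M).trace)) * h1
end
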